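/- Let x be a solution of the heavy ball equation with vanishing damping and source term g satisfying ∫₀^∞ (1+t)^α ‖g(t)‖ dt < ∞. Then for every x* ∈ argmin Φ, the limit lim_{t→+∞} ‖x(t) − x*‖ exists. -/

import Mathlib

open MeasureTheory Filter Real Set RealInnerProductSpace

lemma hb_incr {T a b : ℝ} {f f' u : ℝ → ℝ} (hTa : T ≤ a) (hab : a ≤ b)
    (hf : ∀ t, T ≤ t → HasDerivAt f (f' t) t) (hu : IntegrableOn u (Ici T))
    (hle : ∀ t, T ≤ t → f' t ≤ u t) : f b - f a ≤ ∫ y in a..b, u y := by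
  apply intervalIntegral.sub_le_integral_of_hasDeriv_right_of_le hab (g' := f')
  · intro t ht
    exact (hf t (hTa.trans ht.1)).continuousAt.continuousWithinAt
  · intro t ht
    exact (hf t (hTa.trans ht.1.le)).hasDerivWithinAt
  · exact hu.mono_set (fun t ht => hTa.trans ht.1)
  · intro t ht
    exact hle t (hTa.trans ht.1.le)

lemma hb_upper {T : ℝ} {f f' u : ℝ → ℝ}
    (hf : ∀ t, T ≤ t → HasDerivAt f (f' t) t) (hu : IntegrableOn u (Ici T))
    (hu0 : ∀ t, T ≤ t → 0 ≤ u t)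
    (hle : ∀ t, T ≤ t → f' t ≤ u t) : ∃ M, ∀ t, T ≤ t → f t ≤ M := by
  refine ⟨f T + ∫ y in Ioi T, u y, fun t ht => ?_⟩
  have h1 := hb_incr le_rfl ht hf hu hle
  have h2 : ∫ y in T..t, u y ≤ ∫ y in Ioi T, u y := by
    rw [intervalIntegral.integral_of_le ht]
    apply setIntegral_mono_set (hu.mono_set Ioi_subset_Ici_self)
    · filter_upwards [self_mem_ae_restrict measurableSet_Ioi] with y hy
      exact hu0 y (le_of_lt hy)
    · exact Ioc_subset_Ioi_self.eventuallyLE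
  linarith

lemma hb_conv {T m : ℝ} {f f' u : ℝ → ℝ}
    (hf : ∀ t, T ≤ t → HasDerivAt f (f' t) t) (hu : IntegrableOn u (Ici T))
    (hle : ∀ t, T ≤ t → f' t ≤ u t) (hm : ∀ t, T ≤ t → m ≤ f t) :
    ∃ l, Tendsto f atTop (nhds l) := by
  have hU := intervalIntegral_tendsto_integral_Ioi T (hu.mono_set Ioi_subset_Ici_self)
    (tendsto_id (α := ℝ) (x := atTop))
  set U : ℝ → ℝ := fun t => ∫ y in T..t, u y with hUdef
  have hint : ∀ a b, T ≤ a → T ≤ b → IntervalIntegrable u volume a b := by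
    intro a b ha hb
    rw [intervalIntegrable_iff]
    exact hu.mono_set (fun y hy => (le_inf ha hb).trans hy.1.le)
  have hanti : ∀ a b, T ≤ a → a ≤ b → f b - U b ≤ f a - U a := by
    intro a b ha hab
    have h1 := hb_incr ha hab hf hu hle
    have h2 := intervalIntegral.integral_add_adjacent_intervals (hint T a le_rfl ha)
      (hint a b ha (ha.trans hab))
    simp only [hUdef]
    linarith
  have hA : Antitone (fun t => f (max t T) - U (max t T)) := by
    intro a b hab
    exact hanti _ _ (le_max_right _ _) (max_le_max_right T hab)
  have hUT : Tendsto (fun t => U (max t T)) atTop (nhds (∫ y in Ioi T, u y)) :=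
    hU.congr' (by filter_upwards [eventually_ge_atTop T] with t ht; simp [max_eq_left ht, hUdef])
  have key : ∃ l, Tendsto (fun t => f (max t T) - U (max t T)) atTop (nhds l) := by
    rcases tendsto_atTop_of_antitone hA with h | h
    · exfalso
      have h3 := h.atBot_add hUT
      have h4 := h3.eventually (eventually_lt_atBot m)
      obtain ⟨t, ht⟩ := h4.exists
      have := hm (max t T) (le_max_right _ _)
      linarith
    · exact h
  obtain ⟨l, hl⟩ := key
  refine ⟨l + ∫ y in Ioi T, u y, (hl.add hUT).congr' ?_⟩
  filter_upwards [eventually_ge_atTop T] with t ht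
  simp [max_eq_left ht]

lemma hb_core {c T : ℝ} (hc : 0 < c) (hT : 0 ≤ T) {E E' h h1 h2 w w1 A G v d : ℝ → ℝ}
    (hE : ∀ t, T ≤ t → HasDerivAt E (E' t) t)
    (hh : ∀ t, T ≤ t → HasDerivAt h (h1 t) t)
    (hh1 : ∀ t, T ≤ t → HasDerivAt h1 (h2 t) t)
    (hw : ∀ t, T ≤ t → HasDerivAt w (w1 t) t)
    (hw1 : ∀ t, T ≤ t → HasDerivAt w1 (-A t) t)
    (hhd : ∀ t, T ≤ t → h t = d t ^ 2 / 2)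
    (hh1d : ∀ t, T ≤ t → |h1 t| ≤ v t * d t)
    (hEv : ∀ t, T ≤ t → v t ^ 2 / 2 ≤ E t)
    (hE' : ∀ t, T ≤ t → w t * E' t ≤ - c * v t ^ 2 + G t * v t)
    (hh2 : ∀ t, T ≤ t → w t * h2 t + c * h1 t
      ≤ w t * v t ^ 2 + G t * d t - w t * (E t - v t ^ 2 / 2))
    (hwpos : ∀ t, T ≤ t → 0 < w t) (hwle : ∀ t, T ≤ t → w t ≤ 1 + t)
    (hw1a : ∀ t, T ≤ t → 16 / c * w1 t ≤ 1 / 4)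
    (hw1b : ∀ t, T ≤ t → w1 t ≤ c / 2)
    (hA0 : ∀ t, T ≤ t → 0 ≤ A t) (hG0 : ∀ t, T ≤ t → 0 ≤ G t)
    (hv0 : ∀ t, T ≤ t → 0 ≤ v t) (hd0 : ∀ t, T ≤ t → 0 ≤ d t)
    (hAi : IntegrableOn A (Ici T)) (hGi : IntegrableOn G (Ici T))
    (hw1lim : Tendsto w1 atTop (nhds 0)) :
    ∃ l, Tendsto h atTop (nhds l) := by
  set K : ℝ := 8 / c with hK
  have hKc : K * c = 8 := by rw [hK]; field_simp
  have hKpos : 0 < K := by positivity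
  set P : ℝ → ℝ := fun t => w t ^ 2 * E t with hP
  set P' : ℝ → ℝ := fun t => 2 * w t * w1 t * E t + w t ^ 2 * E' t with hP'
  have hPd : ∀ t, T ≤ t → HasDerivAt P (P' t) t := by
    intro t ht
    have := ((hw t ht).pow 2).mul (hE t ht)
    refine this.congr_deriv ?_
    simp [hP']
  set F : ℝ → ℝ := fun t => K * P t + w t * h1 t + (c - w1 t) * h t with hF
  set F' : ℝ → ℝ := fun t => K * P' t + (w t * h2 t + c * h1 t) + A t * h t with hF'
  have hFd : ∀ t, T ≤ t → HasDerivAt F (F' t) t := by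
    intro t ht
    have := (((hPd t ht).const_mul K).add ((hw t ht).mul (hh1 t ht))).add
      (((hw1 t ht).const_sub c).mul (hh t ht))
    refine this.congr_deriv ?_
    simp only [hF']
    ring
  have hE0 : ∀ t, T ≤ t → 0 ≤ E t := fun t ht => le_trans (by positivity) (hEv t ht)
  have hPv : ∀ t, T ≤ t → (w t * v t) ^ 2 / 2 ≤ P t := by
    intro t ht
    have := mul_le_mul_of_nonneg_left (hEv t ht) (sq_nonneg (w t))
    simp only [hP]
    linarith
  have hwh1 : ∀ t, T ≤ t → |w t * h1 t| ≤ (w t * v t) * d t := by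
    intro t ht
    rw [abs_mul, abs_of_pos (hwpos t ht), mul_assoc]
    exact mul_le_mul_of_nonneg_left (hh1d t ht) (hwpos t ht).le
  have hFlow : ∀ t, T ≤ t → (2 / c) * (w t * v t) ^ 2 + c / 8 * d t ^ 2 ≤ F t := by
    intro t ht
    have a1 := mul_le_mul_of_nonneg_left (hPv t ht) hKpos.le
    have a2 := (abs_le.1 (hwh1 t ht)).1
    have a3 : c / 2 * h t ≤ (c - w1 t) * h t := by
      apply mul_le_mul_of_nonneg_right
      · linarith [hw1b t ht]
      · rw [hhd t ht]; positivity
    rw [hhd t ht] at a3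
    have a4 : (w t * v t) * d t ≤ (2 / c) * (w t * v t) ^ 2 + c / 8 * d t ^ 2 := by
      have : (2 / c) * (w t * v t) ^ 2 + c / 8 * d t ^ 2 - (w t * v t) * d t
        = (2 / c) * (w t * v t - c / 4 * d t) ^ 2 := by field_simp; ring
      have : 0 ≤ (2 / c) * (w t * v t - c / 4 * d t) ^ 2 := by positivity
      linarith
    have a5 : K * ((w t * v t) ^ 2 / 2) = 4 / c * (w t * v t) ^ 2 := by rw [hK]; ring
    have a6 : 4 / c * (w t * v t) ^ 2 = 2 * (2 / c * (w t * v t) ^ 2) := by ring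
    simp only [hF]
    rw [hhd t ht]
    linarith
  have hF0 : ∀ t, T ≤ t → 0 ≤ F t := fun t ht => le_trans (by positivity) (hFlow t ht)
  set C : ℝ := 4 / c + 3 with hC
  have h4c : 0 < 4 / c := by positivity
  have hp2 : ∀ t, T ≤ t → K * (w t * v t) ≤ 4 / c + 2 * F t := by
    intro t ht
    have a1 : K * (w t * v t) ≤ 4 / c + 2 * ((2 / c) * (w t * v t) ^ 2) := by
      have : 4 / c + 2 * ((2 / c) * (w t * v t) ^ 2) - K * (w t * v t)
        = 4 / c * (w t * v t - 1) ^ 2 := by rw [hK]; ring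
      have : 0 ≤ 4 / c * (w t * v t - 1) ^ 2 := by positivity
      linarith
    have : 0 ≤ c / 8 * d t ^ 2 := by positivity
    linarith [hFlow t ht]
  have hd2 : ∀ t, T ≤ t → d t ^ 2 / 2 ≤ 4 / c * F t := by
    intro t ht
    have : 0 ≤ (2 / c) * (w t * v t) ^ 2 := by positivity
    have h' : c / 8 * d t ^ 2 ≤ F t := by linarith [hFlow t ht]
    have := mul_le_mul_of_nonneg_left h' h4c.le
    have e : 4 / c * (c / 8 * d t ^ 2) = d t ^ 2 / 2 := by field_simp; ring
    linarith
  have hsum : ∀ t, T ≤ t → K * (w t * v t) + d t ≤ C * (1 + F t) := by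
    intro t ht
    have a1 := hp2 t ht
    have a2 := hd2 t ht
    have a3 : d t ≤ 1 / 2 + d t ^ 2 / 2 := by nlinarith [sq_nonneg (d t - 1)]
    rw [hC]
    linarith [hF0 t ht]
  have hwE0 : ∀ t, T ≤ t → 0 ≤ w t * E t := fun t ht => mul_nonneg (hwpos t ht).le (hE0 t ht)
  have hKP' : ∀ t, T ≤ t → K * P' t ≤ 1 / 4 * (w t * E t) - 8 * (w t * v t ^ 2)
      + G t * (K * (w t * v t)) := by
    intro t ht
    have a1 := mul_le_mul_of_nonneg_right (hw1a t ht) (hwE0 t ht)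
    have a2 := mul_le_mul_of_nonneg_left (hE' t ht) (mul_pos hKpos (hwpos t ht)).le
    have a3 : K * P' t = 16 / c * w1 t * (w t * E t) + K * w t * (w t * E' t) := by
      simp only [hP', hK]; ring
    have a4 : K * w t * (-c * v t ^ 2 + G t * v t)
        = - (K * c) * (w t * v t ^ 2) + G t * (K * (w t * v t)) := by ring
    rw [hKc] at a4
    linarith
  have hwv0 : ∀ t, T ≤ t → 0 ≤ w t * v t ^ 2 :=
    fun t ht => mul_nonneg (hwpos t ht).le (sq_nonneg _)
  have hFle : ∀ t, T ≤ t → F' t ≤ - (3 / 4) * (w t * E t) + C * (G t + A t) * (1 + F t) := by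
    intro t ht
    have a1 := hKP' t ht
    have a2 := hh2 t ht
    have a3 := mul_le_mul_of_nonneg_left (hsum t ht) (hG0 t ht)
    have a4 := mul_le_mul_of_nonneg_left (hd2 t ht) (hA0 t ht)
    have a5 : A t * (4 / c * F t) ≤ A t * (C * (1 + F t)) := by
      apply mul_le_mul_of_nonneg_left _ (hA0 t ht)
      rw [hC]
      nlinarith [hF0 t ht]
    simp only [hF']
    rw [hhd t ht]
    have := hwv0 t ht
    nlinarith
  have hCpos : 0 < C := by rw [hC]; positivity
  have hGA0 : ∀ t, T ≤ t → 0 ≤ C * (G t + A t) :=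
    fun t ht => mul_nonneg hCpos.le (add_nonneg (hG0 t ht) (hA0 t ht))
  have hGAi : IntegrableOn (fun t => C * (G t + A t)) (Ici T) := (hGi.add hAi).const_mul C
  obtain ⟨M, hM⟩ : ∃ M, ∀ t, T ≤ t → Real.log (1 + F t) ≤ M := by
    apply hb_upper (f' := fun t => F' t / (1 + F t)) (u := fun t => C * (G t + A t)) _ hGAi hGA0
    · intro t ht
      have hp : 0 < 1 + F t := by linarith [hF0 t ht]
      rw [div_le_iff₀ hp]
      linarith [hFle t ht, hwE0 t ht]
    · intro t ht
      have hp : 0 < 1 + F t := by linarith [hF0 t ht]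
      exact ((hFd t ht).const_add 1).log hp.ne'
  set B : ℝ := Real.exp M with hB
  have hFB : ∀ t, T ≤ t → 1 + F t ≤ B := by
    intro t ht
    have hp : 0 < 1 + F t := by linarith [hF0 t ht]
    exact (Real.log_le_iff_le_exp hp).1 (hM t ht)
  set u : ℝ → ℝ := fun t => C * (G t + A t) * B with hu
  have hui : IntegrableOn u (Ici T) := hGAi.mul_const B
  have hu0 : ∀ t, T ≤ t → 0 ≤ u t := fun t ht => mul_nonneg (hGA0 t ht) (Real.exp_pos _).le
  have hFu : ∀ t, T ≤ t → F' t ≤ - (3 / 4) * (w t * E t) + u t := by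
    intro t ht
    have := mul_le_mul_of_nonneg_left (hFB t ht) (hGA0 t ht)
    linarith [hFle t ht]
  obtain ⟨lF, hlF⟩ : ∃ l, Tendsto F atTop (nhds l) := by
    refine hb_conv hFd hui (fun t ht => ?_) hF0
    linarith [hFu t ht, hwE0 t ht]
  have hKPu : ∀ t, T ≤ t → K * P' t ≤ 1 / 4 * (w t * E t) + u t := by
    intro t ht
    have a1 := hKP' t ht
    have a3 := mul_le_mul_of_nonneg_left (hsum t ht) (hG0 t ht)
    have a4 := mul_le_mul_of_nonneg_left (hFB t ht) (mul_nonneg hCpos.le (hG0 t ht))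
    have a5 : 0 ≤ C * A t * B := mul_nonneg (mul_nonneg hCpos.le (hA0 t ht)) (Real.exp_pos _).le
    have a6 := mul_nonneg (hG0 t ht) (hd0 t ht)
    have := hwv0 t ht
    simp only [hu]
    nlinarith
  have hP0 : ∀ t, T ≤ t → 0 ≤ P t := fun t ht => le_trans (by positivity) (hPv t ht)
  obtain ⟨lS, hlS⟩ : ∃ l, Tendsto (fun t => K * P t + F t) atTop (nhds l) := by
    refine hb_conv (m := 0) (fun t ht => ((hPd t ht).const_mul K).add (hFd t ht))
      (hui.const_mul 2) (fun t ht => ?_) (fun t ht => ?_)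
    · linarith [hFu t ht, hwE0 t ht, hKPu t ht]
    · exact add_nonneg (mul_nonneg hKpos.le (hP0 t ht)) (hF0 t ht)
  have hlP : Tendsto P atTop (nhds ((lS - lF) / K)) := by
    refine ((hlS.sub hlF).div_const K).congr (fun t => ?_)
    field_simp
    ring
  set L := (lS - lF) / K with hL
  have hL0 : 0 ≤ L := ge_of_tendsto hlP (by
    filter_upwards [eventually_ge_atTop T] with t ht using hP0 t ht)
  have hLz : L = 0 := by
    by_contra hne
    have hLpos : 0 < L := lt_of_le_of_ne hL0 (Ne.symm hne)
    have hev : ∀ᶠ t in atTop, L / 2 < P t := hlP.eventually_const_lt (by linarith)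
    obtain ⟨T1, hT1⟩ := eventually_atTop.1 (hev.and (eventually_ge_atTop T))
    have hT1T : T ≤ T1 := (hT1 T1 le_rfl).2
    obtain ⟨M2, hM2⟩ : ∃ M2, ∀ t, T1 ≤ t → F t + L / 4 * Real.log (1 + t) ≤ M2 := by
      apply hb_upper (f' := fun t => F' t + L / 4 * (1 / (1 + t))) (u := u) _
        (hui.mono_set (Ici_subset_Ici.2 hT1T)) (fun t ht => hu0 t (hT1T.trans ht))
      · intro t ht
        have ht' := hT1T.trans ht
        have b1 := (hT1 t ht).1
        have hp : 0 < 1 + t := by linarith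
        have b2 : L / 2 * (1 / (1 + t)) ≤ w t * E t := by
          rw [mul_one_div, div_le_iff₀ hp]
          have : w t * E t * w t ≤ w t * E t * (1 + t) :=
            mul_le_mul_of_nonneg_left (hwle t ht') (hwE0 t ht')
          have e : P t = w t * E t * w t := by simp only [hP]; ring
          linarith
        have := hwE0 t ht'
        linarith [hFu t ht']
      · intro t ht
        have ht' := hT1T.trans ht
        have hp : 0 < 1 + t := by linarith
        exact (hFd t ht').add ((((hasDerivAt_id t).const_add 1).log hp.ne').const_mul (L / 4))
    have hlog : Tendsto (fun t : ℝ => L / 4 * Real.log (1 + t)) atTop atTop :=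
      (Real.tendsto_log_atTop.comp (tendsto_atTop_add_const_left _ 1 tendsto_id)).const_mul_atTop
        (by positivity)
    obtain ⟨t, ht1, ht2⟩ := ((hlog.eventually (eventually_gt_atTop M2)).and
      (eventually_ge_atTop T1)).exists
    linarith [hM2 t ht2, hF0 t (hT1T.trans ht2)]
  rw [hLz] at hlP
  have hwh : Tendsto (fun t => w t * h1 t) atTop (nhds 0) := by
    set D := 16 / c * B with hD
    have hs : Tendsto (fun t => Real.sqrt (P t * D)) atTop (nhds 0) := by
      have := (hlP.mul_const D).sqrt
      simpa using this
    apply squeeze_zero_norm' _ hs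
    filter_upwards [eventually_ge_atTop T] with t ht
    rw [Real.norm_eq_abs]
    refine (hwh1 t ht).trans (Real.le_sqrt_of_sq_le ?_)
    rw [mul_pow]
    have a1 := hPv t ht
    have a2 := hd2 t ht
    have a3 : 4 / c * F t ≤ 4 / c * B := by
      apply mul_le_mul_of_nonneg_left _ h4c.le
      linarith [hFB t ht]
    have a4 : d t ^ 2 ≤ D / 2 := by
      have : D / 2 = 2 * (4 / c * B) := by rw [hD]; ring
      linarith
    have := mul_le_mul (show (w t * v t) ^ 2 ≤ 2 * P t by linarith) a4 (sq_nonneg _)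
      (by linarith [hP0 t ht])
    linarith
  have hfin : Tendsto (fun t => (F t - K * P t - w t * h1 t) / (c - w1 t)) atTop
      (nhds ((lF - K * 0 - 0) / (c - 0))) := by
    refine ((hlF.sub (hlP.const_mul K)).sub hwh).div (tendsto_const_nhds.sub hw1lim) ?_
    simpa using hc.ne'
  refine ⟨_, hfin.congr' ?_⟩
  filter_upwards [eventually_ge_atTop T] with t ht
  have : c - w1 t ≠ 0 := by
    have := hw1b t ht
    intro h0
    linarith
  rw [div_eq_iff this]
  simp only [hF]
  ring

lemma hb_convex {H : Type*} [NormedAddCommGroup H] [InnerProductSpace ℝ H] [CompleteSpace H]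
    {Φ : H → ℝ} {p u y : H} (hΦ : ConvexOn ℝ Set.univ Φ) (hd : HasGradientAt Φ p u) :
    Φ u - Φ y ≤ inner ℝ p (u - y) := by
  have hcv : ConvexOn ℝ Set.univ (fun s : ℝ => Φ (AffineMap.lineMap u y s)) := by
    have h0 := hΦ.comp_affineMap (AffineMap.lineMap (k := ℝ) u y)
    rw [preimage_univ] at h0
    exact h0
  have hder : HasDerivAt (fun s : ℝ => Φ (AffineMap.lineMap u y s)) (inner ℝ p (y - u)) 0 := by
    have h1 : HasDerivAt (fun s : ℝ => (AffineMap.lineMap u y s : H)) (y - u) 0 :=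
      AffineMap.hasDerivAt_lineMap
    have h2 := hd.hasFDerivAt
    have h3 : HasFDerivAt Φ (InnerProductSpace.toDual ℝ H p) (AffineMap.lineMap u y (0:ℝ)) := by
      simpa using h2
    have := h3.comp_hasDerivAt (0:ℝ) h1
    exact this.congr_deriv (by simp)
  have := hcv.le_slope_of_hasDerivAt (mem_univ 0) (mem_univ 1) zero_lt_one hder
  simp [slope_def_field] at this
  rw [← neg_sub y u, inner_neg_right]
  linarith

theorem heavy_ball_distance_limit_exists
    {H : Type*} [NormedAddCommGroup H] [InnerProductSpace ℝ H] [CompleteSpace H]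
    (c α : ℝ) (hc : 0 < c) (hα0 : 0 ≤ α) (hα1 : α < 1)
    (Φ : H → ℝ) (Φ' : H → H) (Φstar : ℝ)
    (hΦconv : ConvexOn ℝ Set.univ Φ)
    (hΦdiff : ∀ u : H, HasGradientAt Φ (Φ' u) u)
    (hΦcont : Continuous Φ')
    (hargmin : {v : H | ∀ u, Φ v ≤ Φ u}.Nonempty)
    (hΦstar : ∀ v ∈ {v : H | ∀ u, Φ v ≤ Φ u}, Φ v = Φstar)
    (g : ℝ → H) (hg : IntegrableOn g (Ici (0:ℝ)))
    (x x' x'' : ℝ → H)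
    (hx1 : ∀ t ∈ Ici (0:ℝ), HasDerivAt x (x' t) t)
    (hx2 : ∀ t ∈ Ici (0:ℝ), HasDerivAt x' (x'' t) t)
    (hode : ∀ t ∈ Ici (0:ℝ),
      x'' t + (c / (1 + t) ^ α) • x' t + Φ' (x t) = g t)
    (hgα : IntegrableOn (fun t => (1 + t) ^ α * ‖g t‖) (Ici (0:ℝ))) :
    ∀ xstar ∈ {v : H | ∀ u, Φ v ≤ Φ u},
      ∃ l : ℝ, Tendsto (fun t => ‖x t - xstar‖) atTop (nhds l) := by
  intro xstar hxs
  have hmin : ∀ u, Φ xstar ≤ Φ u := hxs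
  have hlim : Tendsto (fun t : ℝ => α * (1 + t) ^ (α - 1)) atTop (nhds 0) := by
    have h1 := (tendsto_rpow_neg_atTop (show 0 < 1 - α by linarith)).comp
      (tendsto_atTop_add_const_left atTop (1:ℝ) tendsto_id)
    have h2 := h1.const_mul α
    simp only [mul_zero] at h2
    refine h2.congr (fun t => ?_)
    simp
  have hev : ∀ᶠ t : ℝ in atTop, α * (1 + t) ^ (α - 1) < min (c / 64) (c / 2) :=
    hlim.eventually_lt_const (by positivity)
  obtain ⟨T, hT⟩ := eventually_atTop.1 (hev.and (eventually_ge_atTop 0))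
  have hT0 : 0 ≤ T := (hT T le_rfl).2
  have hsub : Ici T ⊆ Ici (0:ℝ) := Ici_subset_Ici.2 hT0
  have hpos : ∀ t, T ≤ t → 0 < 1 + t := fun t ht => by linarith
  have hwpos : ∀ t, T ≤ t → 0 < (1 + t) ^ α := fun t ht => Real.rpow_pos_of_pos (hpos t ht) _
  have hrp : ∀ (β : ℝ) t, T ≤ t → HasDerivAt (fun t : ℝ => (1 + t) ^ β) (β * (1 + t) ^ (β - 1)) t := by
    intro β t ht
    have := ((hasDerivAt_id t).const_add 1).rpow_const (p := β) (Or.inl (hpos t ht).ne')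
    refine this.congr_deriv ?_
    simp
  have key := hb_core (c := c) (T := T) hc hT0
    (E := fun t => 1 / 2 * ‖x' t‖ ^ 2 + (Φ (x t) - Φ xstar))
    (E' := fun t => ⟪x' t, x'' t⟫ + ⟪Φ' (x t), x' t⟫)
    (h := fun t => 1 / 2 * ‖x t - xstar‖ ^ 2)
    (h1 := fun t => ⟪x t - xstar, x' t⟫)
    (h2 := fun t => ⟪x t - xstar, x'' t⟫ + ⟪x' t, x' t⟫)
    (w := fun t => (1 + t) ^ α)
    (w1 := fun t => α * (1 + t) ^ (α - 1))
    (A := fun t => α * (1 - α) * (1 + t) ^ (α - 2))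
    (G := fun t => (1 + t) ^ α * ‖g t‖)
    (v := fun t => ‖x' t‖) (d := fun t => ‖x t - xstar‖)
    ?_ ?_ ?_ ?_ ?_ ?_ ?_ ?_ ?_ ?_ ?_ ?_ ?_ ?_ ?_ ?_ ?_ ?_ ?_ ?_ ?_
  · obtain ⟨l, hl⟩ := key
    refine ⟨Real.sqrt (2 * l), ((hl.const_mul 2).sqrt).congr (fun t => ?_)⟩
    rw [show 2 * (1 / 2 * ‖x t - xstar‖ ^ 2) = ‖x t - xstar‖ ^ 2 by ring]
    exact Real.sqrt_sq (norm_nonneg _)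
  · intro t ht
    have a1 := ((hx2 t (hsub ht)).norm_sq).const_mul (1 / 2)
    have a2 : HasDerivAt (fun t => Φ (x t)) ⟪Φ' (x t), x' t⟫ t := by
      have := (hΦdiff (x t)).hasFDerivAt.comp_hasDerivAt t (hx1 t (hsub ht))
      exact this.congr_deriv (by simp)
    refine (a1.add (a2.sub_const _)).congr_deriv ?_
    ring
  · intro t ht
    refine (((hx1 t (hsub ht)).sub_const xstar).norm_sq.const_mul (1 / 2)).congr_deriv ?_
    ring
  · intro t ht
    exact ((hx1 t (hsub ht)).sub_const xstar).inner ℝ (hx2 t (hsub ht))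
  · exact hrp α
  · intro t ht
    refine ((hrp (α - 1) t ht).const_mul α).congr_deriv ?_
    rw [show α - 1 - 1 = α - 2 by ring]
    ring
  · intro t ht
    ring
  · intro t ht
    rw [mul_comm]
    exact abs_real_inner_le_norm _ _
  · intro t ht
    have := hmin (x t)
    linarith
  · intro t ht
    have ho := hode t (hsub ht)
    have hx : x'' t = g t - (c / (1 + t) ^ α) • x' t - Φ' (x t) := by rw [← ho]; abel
    have hw := hwpos t ht
    rw [hx, inner_sub_right, inner_sub_right, real_inner_smul_right, real_inner_self_eq_norm_sq,
      real_inner_comm (x' t) (Φ' (x t))]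
    have b := real_inner_le_norm (x' t) (g t)
    have b' := mul_le_mul_of_nonneg_left b hw.le
    have e : (1 + t) ^ α * (c / (1 + t) ^ α * ‖x' t‖ ^ 2) = c * ‖x' t‖ ^ 2 := by field_simp
    linarith
  · intro t ht
    have ho := hode t (hsub ht)
    have hx : x'' t = g t - (c / (1 + t) ^ α) • x' t - Φ' (x t) := by rw [← ho]; abel
    have hw := hwpos t ht
    rw [hx, inner_sub_right, inner_sub_right, real_inner_smul_right, real_inner_self_eq_norm_sq]
    have b := real_inner_le_norm (x t - xstar) (g t)
    have b' := mul_le_mul_of_nonneg_left b hw.le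
    have cv := hb_convex (y := xstar) hΦconv (hΦdiff (x t))
    rw [real_inner_comm] at cv
    have cv' := mul_le_mul_of_nonneg_left cv hw.le
    have e : (1 + t) ^ α * (c / (1 + t) ^ α * ⟪x t - xstar, x' t⟫)
      = c * ⟪x t - xstar, x' t⟫ := by field_simp
    linarith
  · exact hwpos
  · intro t ht
    have := Real.rpow_le_rpow_of_exponent_le (show 1 ≤ 1 + t by linarith) hα1.le
    simpa using this
  · intro t ht
    have a := (hT t ht).1.le.trans (min_le_left _ _)
    have := mul_le_mul_of_nonneg_left a (show 0 ≤ 16 / c by positivity)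
    have e : 16 / c * (c / 64) = 1 / 4 := by field_simp; norm_num
    linarith
  · intro t ht
    exact (hT t ht).1.le.trans (min_le_right _ _)
  · intro t ht
    exact mul_nonneg (mul_nonneg hα0 (by linarith)) (Real.rpow_nonneg (hpos t ht).le _)
  · intro t ht
    exact mul_nonneg (hwpos t ht).le (norm_nonneg _)
  · intro t ht
    exact norm_nonneg _
  · intro t ht
    exact norm_nonneg _
  · apply Integrable.const_mul
    have := integrableOn_add_rpow_Ioi_of_lt (a := α - 2) (c := T) (m := 1) (by linarith) (by linarith)
    have h2 : IntegrableOn (fun t : ℝ => (t + 1) ^ (α - 2)) (Ici T) := 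
      (integrableOn_Ici_iff_integrableOn_Ioi (by simp)).2 this
    simpa only [add_comm, IntegrableOn] using h2
  · exact hgα.mono_set hsub
  · exact hlim
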